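/- Let k be an infinite field, r a nonzero integer, and m ≥ 1. Let the multiplicative group kˣ act on the polynomial ring k[Y,Z] by k-algebra automorphisms determined by t·Y = t^(−r)·Y and t·Z = t^(mr)·Z. Then the ring of kˣ-invariant polynomials equals the k-subalgebra generated by the single polynomial Y^m·Z, i.e. k[Y,Z]^{kˣ} = k[Y^m Z]. -/

import Mathlib

/-!
A monomial of exponent `d` spans a weight space of the torus: `t` acts on it by `t ^ weight w d`.
When a domain has infinitely many units, distinct integer weights give distinct characters of its
unit group, so the invariants are spanned by the monomials of weight `0`. For the weights
`(-r, mr)` with `r ≠ 0` these are exactly the powers of `Y ^ m * Z`.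
-/

open MvPolynomial

/-- For `t ∈ kˣ`, the `k`-algebra automorphism of `k[Y,Z]` (with `Y = X 0`, `Z = X 1`)
determined by `Y ↦ t^(−r)·Y` and `Z ↦ t^(mr)·Z`. -/
noncomputable def torusSubst (k : Type*) [Field k] (r : ℤ) (m : ℕ) (t : kˣ) :
    MvPolynomial (Fin 2) k →ₐ[k] MvPolynomial (Fin 2) k :=
  MvPolynomial.aeval
    ![MvPolynomial.C ((t ^ (-r) : kˣ) : k) * MvPolynomial.X 0,
      MvPolynomial.C ((t ^ ((m : ℤ) * r) : kˣ) : k) * MvPolynomial.X 1]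

theorem zpow_sum {ι G : Type*} [CommGroup G] (g : G) (s : Finset ι) (n : ι → ℤ) :
    g ^ (∑ i ∈ s, n i) = ∏ i ∈ s, g ^ n i :=
  map_prod (zpowersHom G g) (fun i => Multiplicative.ofAdd (n i)) s

section InfiniteUnits

theorem infinite_units (K : Type*) [GroupWithZero K] [Infinite K] : Infinite Kˣ :=
  have : Infinite {a : K // a ≠ 0} := (Set.finite_singleton (0 : K)).infinite_compl.to_subtype
  unitsEquivNeZero.infinite_iff.mpr this

theorem exists_units_zpow_ne_one {R : Type*} [CommRing R] [IsDomain R] [Infinite Rˣ] {n : ℤ}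
    (hn : n ≠ 0) : ∃ t : Rˣ, t ^ n ≠ 1 := by
  by_contra! h
  have : NeZero n.natAbs := ⟨Int.natAbs_ne_zero.mpr hn⟩
  have h_top : rootsOfUnity n.natAbs R = ⊤ :=
    eq_top_iff.mpr fun t _ => pow_natAbs_eq_one.mpr (h t)
  have h_finite : Finite (rootsOfUnity n.natAbs R) := inferInstance
  rw [h_top, Subgroup.topEquiv.toEquiv.finite_iff] at h_finite
  exact not_finite Rˣ

theorem injective_zpow_units (R : Type*) [CommRing R] [IsDomain R] [Infinite Rˣ] :
    Function.Injective fun (n : ℤ) (t : Rˣ) => t ^ n := by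
  intro a b hab
  by_contra hne
  obtain ⟨t, ht⟩ := exists_units_zpow_ne_one (R := R) (sub_ne_zero.mpr hne)
  exact ht (by rw [zpow_sub, mul_inv_eq_one]; exact congrFun hab t)

end InfiniteUnits

section WeightScaling

variable {σ R : Type*}

/-- The action of `t ∈ Rˣ` on `R[X_i : i ∈ σ]` with integer weights `w`, sending `X i` to
`t ^ w i • X i`. -/
noncomputable def weightScaling [CommSemiring R] (w : σ → ℤ) (t : Rˣ) :
    MvPolynomial σ R →ₐ[R] MvPolynomial σ R :=
  aeval fun i => t ^ w i • X i

theorem weightScaling_monomial [CommSemiring R] (w : σ → ℤ) (t : Rˣ) (d : σ →₀ ℕ) (a : R) :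
    weightScaling w t (monomial d a) = t ^ Finsupp.weight w d • monomial d a := by
  have h_char : ∏ i ∈ d.support, (t ^ w i) ^ d i = t ^ Finsupp.weight w d := by
    simp only [Finsupp.weight_apply, Finsupp.sum, zpow_sum, ← zpow_natCast, ← zpow_mul,
      nsmul_eq_mul, mul_comm (w _)]
  rw [weightScaling, aeval_monomial, monomial_eq, algebraMap_eq, ← mul_smul_comm]
  simp only [Finsupp.prod, smul_pow, Finset.prod_smul, h_char]

theorem coeff_weightScaling [CommSemiring R] (w : σ → ℤ) (t : Rˣ) (d : σ →₀ ℕ)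
    (f : MvPolynomial σ R) :
    coeff d (weightScaling w t f) = t ^ Finsupp.weight w d • coeff d f := by
  classical
  induction f using MvPolynomial.induction_on' with
  | monomial e a =>
    rw [weightScaling_monomial, coeff_smul, coeff_monomial]
    split_ifs with h
    · rw [h]
    · simp only [smul_zero]
  | add p q hp hq => rw [map_add, coeff_add, coeff_add, hp, hq, smul_add]

theorem forall_weightScaling_eq_smul_iff [CommRing R] [IsDomain R] [Infinite Rˣ] (w : σ → ℤ)
    (n : ℤ) (f : MvPolynomial σ R) :
    (∀ t : Rˣ, weightScaling w t f = t ^ n • f) ↔ IsWeightedHomogeneous w f n := by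
  refine ⟨fun h d hd => injective_zpow_units R (funext fun t => ?_), fun h t => ?_⟩
  · have h_coeff : t ^ Finsupp.weight w d • coeff d f = t ^ n • coeff d f := by
      rw [← coeff_weightScaling, h t, coeff_smul]
    exact Units.ext (mul_right_cancel₀ hd h_coeff)
  · ext d
    rw [coeff_weightScaling, coeff_smul]
    by_cases hd : coeff d f = 0
    · rw [hd, smul_zero, smul_zero]
    · rw [h hd]

end WeightScaling

theorem mem_adjoin_monomial_one_iff {σ R : Type*} [CommSemiring R] {s : Set (σ →₀ ℕ)}
    {f : MvPolynomial σ R} :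
    f ∈ Algebra.adjoin R ((monomial · (1 : R)) '' s) ↔
      (f.support : Set (σ →₀ ℕ)) ⊆ AddSubmonoid.closure s := by
  have h_closure : (Submonoid.closure ((monomial · (1 : R)) '' s) : Set (MvPolynomial σ R)) =
      (monomial · 1) '' (AddSubmonoid.closure s : Set (σ →₀ ℕ)) := by
    have h_map := MonoidHom.map_mclosure (monomialOneHom R σ) (Multiplicative.toAdd ⁻¹' s)
    rw [← AddSubmonoid.toSubmonoid_closure] at h_map
    exact (congrArg SetLike.coe h_map).symm
  rw [← mem_restrictSupport_iff (R := R), restrictSupport_eq_span, ← h_closure,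
    ← Algebra.adjoin_eq_span, Subalgebra.mem_toSubmodule]

theorem weight_eq_zero_iff_mem_closure_singleton {r : ℤ} (hr : r ≠ 0) (m : ℕ) (d : Fin 2 →₀ ℕ) :
    Finsupp.weight ![-r, m * r] d = 0 ↔
      d ∈ AddSubmonoid.closure {Finsupp.single 0 m + Finsupp.single 1 1} := by
  have h_weight : Finsupp.weight ![-r, m * r] d = r * (m * d 1 - d 0) := by
    simp only [Finsupp.weight_eq_sum, Fin.sum_univ_two, Matrix.cons_val_zero, Matrix.cons_val_one,
      nsmul_eq_mul]
    ring
  rw [h_weight, mul_eq_zero_iff_left hr, sub_eq_zero, AddSubmonoid.mem_closure_singleton]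
  constructor
  · intro h
    have h_nat : d 1 * m = d 0 := by rw [mul_comm]; exact_mod_cast h
    refine ⟨d 1, Finsupp.ext fun i => ?_⟩
    fin_cases i <;> simp [h_nat]
  · rintro ⟨n, rfl⟩
    simp [mul_comm]

theorem torus_invariants_eq_adjoin_general
    {R : Type*} [CommRing R] [IsDomain R] [Infinite Rˣ] {r : ℤ} (hr : r ≠ 0) (m : ℕ)
    (f : MvPolynomial (Fin 2) R) :
    (∀ t : Rˣ, weightScaling ![-r, m * r] t f = f) ↔
      f ∈ Algebra.adjoin R ({X 0 ^ m * X 1} : Set (MvPolynomial (Fin 2) R)) := by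
  have h_generator : (X 0 ^ m * X 1 : MvPolynomial (Fin 2) R) =
      monomial (Finsupp.single 0 m + Finsupp.single 1 1) 1 := by
    rw [X_pow_eq_monomial, X, monomial_mul, one_mul]
  calc (∀ t : Rˣ, weightScaling ![-r, m * r] t f = f)
    _ ↔ IsWeightedHomogeneous ![-r, m * r] f 0 := by
      simp only [← forall_weightScaling_eq_smul_iff, zpow_zero, one_smul]
    _ ↔ (f.support : Set (Fin 2 →₀ ℕ)) ⊆
          AddSubmonoid.closure {Finsupp.single (0 : Fin 2) m + Finsupp.single 1 1} :=
      forall_congr' fun d =>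
        imp_congr mem_support_iff.symm (weight_eq_zero_iff_mem_closure_singleton hr m d)
    _ ↔ f ∈ Algebra.adjoin R {X 0 ^ m * X 1} := by
      rw [← mem_adjoin_monomial_one_iff (R := R), Set.image_singleton, h_generator]

theorem torusSubst_eq_weightScaling (k : Type*) [Field k] (r : ℤ) (m : ℕ) (t : kˣ) :
    torusSubst k r m t = weightScaling ![-r, m * r] t := by
  ext i : 1
  fin_cases i <;> simp [torusSubst, weightScaling, Units.smul_def, smul_eq_C_mul]

/-- Let `k` be an infinite field, `r` a nonzero integer, and `m ≥ 1`.
Let `kˣ` act on `k[Y,Z]` by `t·Y = t^(−r)·Y` and `t·Z = t^(mr)·Z`. Then the ring of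
`kˣ`-invariant polynomials equals the `k`-subalgebra generated by `Y^m·Z`, i.e.
`k[Y,Z]^{kˣ} = k[Y^m Z]`. -/
theorem torus_invariants_eq_adjoin
    (k : Type*) [Field k] [Infinite k] (r : ℤ) (hr : r ≠ 0) (m : ℕ) (hm : 1 ≤ m)
    (f : MvPolynomial (Fin 2) k) :
    (∀ t : kˣ, torusSubst k r m t f = f) ↔
      f ∈ Algebra.adjoin k
        ({MvPolynomial.X 0 ^ m * MvPolynomial.X 1} : Set (MvPolynomial (Fin 2) k)) := by
  have := infinite_units k
  simpa only [torusSubst_eq_weightScaling] using torus_invariants_eq_adjoin_general hr m f
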